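/- Let X and Y be compact metric spaces, let 𝒯 : P(X) × P(Y) → ℝ ∪ {+∞} be a backward linear transfer, and let T denote the extension of its Kantorovich operator defined by Tg(x) := sup{ ∫_Y g dσ − 𝒯(δ_x,σ) : σ ∈ P(Y) } for upper semicontinuous bounded-above g : Y → [−∞,∞). Then: (1) for every (μ,ν) ∈ P(X) × P(Y), 𝒯(μ,ν) = sup{ ∫_Y g dν − ∫_X Tg dμ : g upper semicontinuous, bounded above and bounded below on Y }; (2) for every μ ∈ P(X) and every upper semicontinuous bounded-above g : Y → [−∞,∞), sup_{σ∈P(Y)} { ∫_Y g dσ − 𝒯(μ,σ) } = ∫_X Tg dμ. -/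

import Mathlib

open MeasureTheory Topology Filter Set
open scoped ENNReal NNReal

noncomputable section

/-- The positive part of an extended real number, as an element of `ℝ≥0∞`. -/
def epos (a : EReal) : ℝ≥0∞ := if a = ⊤ then ⊤ else ENNReal.ofReal a.toReal

/-- Signed integral of an `EReal`-valued function (the natural value when `f` is
bounded above or bounded below). -/
def eint {α : Type*} [MeasurableSpace α] (μ : Measure α) (f : α → EReal) : EReal :=
  ((∫⁻ x, epos (f x) ∂μ : ℝ≥0∞) : EReal) - ((∫⁻ x, epos (-(f x)) ∂μ : ℝ≥0∞) : EReal)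

/-- The Dirac measure at a point, as a probability measure. -/
def diracP {α : Type*} [MeasurableSpace α] (x : α) : ProbabilityMeasure α :=
  ⟨Measure.dirac x, inferInstance⟩

/-- The backward Kantorovich operator of a transfer functional `𝒯`, on continuous
functions: `T⁻g(x) = sup_{σ ∈ P(Y)} { ∫ g dσ − 𝒯(δ_x, σ) }`. -/
def TopC {X Y : Type*} [MeasurableSpace X] [TopologicalSpace Y] [MeasurableSpace Y]
    (𝒯 : ProbabilityMeasure X → ProbabilityMeasure Y → EReal)
    (g : C(Y, ℝ)) (x : X) : EReal :=
  ⨆ σ : ProbabilityMeasure Y, (((∫ y, g y ∂(σ : Measure Y)) : ℝ) : EReal) - 𝒯 (diracP x) σ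

/-- The backward Kantorovich operator of a transfer functional `𝒯`, extended to
extended-real-valued functions. -/
def TopU {X Y : Type*} [MeasurableSpace X] [MeasurableSpace Y]
    (𝒯 : ProbabilityMeasure X → ProbabilityMeasure Y → EReal)
    (g : Y → EReal) (x : X) : EReal :=
  ⨆ σ : ProbabilityMeasure Y, eint (σ : Measure Y) g - 𝒯 (diracP x) σ

/-- A backward linear transfer: a proper, bounded below, jointly convex,
weak*-lower semicontinuous functional on `P(X) × P(Y)` with values in `ℝ ∪ {+∞}`,
such that the Legendre transform of each partial map `𝒯(μ,·)` is given by
integrating the backward Kantorovich operator against `μ`. -/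
def IsBLT {X Y : Type*} [TopologicalSpace X] [MeasurableSpace X] [OpensMeasurableSpace X]
    [TopologicalSpace Y] [MeasurableSpace Y] [OpensMeasurableSpace Y]
    (𝒯 : ProbabilityMeasure X → ProbabilityMeasure Y → EReal) : Prop :=
  (∀ μ ν, 𝒯 μ ν ≠ ⊥) ∧
  (∃ μ ν, 𝒯 μ ν ≠ ⊤) ∧
  (∃ m : ℝ, ∀ μ ν, (m : EReal) ≤ 𝒯 μ ν) ∧
  (∀ (μ₁ μ₂ : ProbabilityMeasure X) (ν₁ ν₂ : ProbabilityMeasure Y)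
      (μ : ProbabilityMeasure X) (ν : ProbabilityMeasure Y) (a b : ℝ≥0),
      a + b = 1 →
      (μ : Measure X) = a • (μ₁ : Measure X) + b • (μ₂ : Measure X) →
      (ν : Measure Y) = a • (ν₁ : Measure Y) + b • (ν₂ : Measure Y) →
      𝒯 μ ν ≤ ((a : ℝ) : EReal) * 𝒯 μ₁ ν₁ + ((b : ℝ) : EReal) * 𝒯 μ₂ ν₂) ∧
  LowerSemicontinuous (fun p : ProbabilityMeasure X × ProbabilityMeasure Y => 𝒯 p.1 p.2) ∧
  (∀ (μ : ProbabilityMeasure X) (g : C(Y, ℝ)),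
      (⨆ σ : ProbabilityMeasure Y,
        (((∫ y, g y ∂(σ : Measure Y)) : ℝ) : EReal) - 𝒯 μ σ)
        = eint (μ : Measure X) (TopC 𝒯 g))

/-- A transfer is standard if every Dirac measure admits a finite-cost target. -/
def IsStandardT {X Y : Type*} [MeasurableSpace X] [MeasurableSpace Y]
    (𝒯 : ProbabilityMeasure X → ProbabilityMeasure Y → EReal) : Prop :=
  ∀ x : X, ∃ σ : ProbabilityMeasure Y, 𝒯 (diracP x) σ ≠ ⊤

section ExtendedIntegral

variable {α : Type*} [MeasurableSpace α]

lemma eint_mono (μ : Measure α) {f g : α → EReal} (h : f ≤ g) : eint μ f ≤ eint μ g := by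
  refine EReal.sub_le_sub ?_ ?_
  · exact EReal.coe_ennreal_le_coe_ennreal_iff.2
      (lintegral_mono fun x => EReal.toENNReal_le_toENNReal (h x))
  · exact EReal.coe_ennreal_le_coe_ennreal_iff.2
      (lintegral_mono fun x => EReal.toENNReal_le_toENNReal (EReal.neg_le_neg_iff.2 (h x)))

lemma eint_coe (μ : Measure α) {f : α → ℝ} (hf : Integrable f μ) :
    eint μ (fun x => (f x : EReal)) = ((∫ x, f x ∂μ : ℝ) : EReal) := by
  have hpos : (∫⁻ x, ENNReal.ofReal (f x) ∂μ) ≠ ⊤ :=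
    ((lintegral_mono fun x => Real.ofReal_le_enorm (f x)).trans_lt hf.2).ne
  have hneg : (∫⁻ x, ENNReal.ofReal (-f x) ∂μ) ≠ ⊤ :=
    ((lintegral_mono fun x => (Real.ofReal_le_enorm (-f x)).trans_eq (enorm_neg _)).trans_lt
      hf.2).ne
  have h1 : ∀ x, epos (f x : EReal) = ENNReal.ofReal (f x) := fun x => by simp [epos]
  have h2 : ∀ x, epos (-(f x : EReal)) = ENNReal.ofReal (-f x) := fun x => by
    rw [← EReal.coe_neg]; simp only [epos, EReal.coe_ne_top, if_false, EReal.toReal_coe]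
  simp only [eint, h1, h2]
  rw [integral_eq_lintegral_pos_part_sub_lintegral_neg_part hf, EReal.coe_sub,
    EReal.coe_ennreal_toReal hpos, EReal.coe_ennreal_toReal hneg]

lemma eint_le_of_le (μ : Measure α) [IsProbabilityMeasure μ] {f : α → EReal} {C : ℝ}
    (h : ∀ x, f x ≤ C) : eint μ f ≤ C := by
  refine (eint_mono μ h).trans_eq ?_
  rw [eint_coe μ (integrable_const C)]
  simp

/-- Monotone convergence from above for the signed integral. -/
lemma tendsto_eint_of_antitone (μ : Measure α) [IsProbabilityMeasure μ] {f : ℕ → α → EReal}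
    {g : α → EReal} (hf : ∀ n, Measurable (f n)) (hanti : Antitone f) {C : ℝ}
    (hC : ∀ x, f 0 x ≤ C) (hlim : ∀ x, Tendsto (fun n => f n x) atTop (𝓝 (g x))) :
    Tendsto (fun n => eint μ (f n)) atTop (𝓝 (eint μ g)) := by
  have hle : ∀ n x, f n x ≤ C := fun n x => (hanti (Nat.zero_le n) x).trans (hC x)
  have hpos : Tendsto (fun n => ∫⁻ x, epos (f n x) ∂μ) atTop (𝓝 (∫⁻ x, epos (g x) ∂μ)) := by
    refine tendsto_lintegral_of_dominated_convergence (fun _ => ENNReal.ofReal C)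
      (fun n => (hf n).ereal_toENNReal) (fun n => ae_of_all _ fun x => ?_) (by simp)
      (ae_of_all _ fun x => (EReal.continuous_toENNReal.tendsto _).comp (hlim x))
    simpa using! EReal.toENNReal_le_toENNReal (hle n x)
  have hneg : Tendsto (fun n => ∫⁻ x, epos (-(f n x)) ∂μ) atTop
      (𝓝 (∫⁻ x, epos (-(g x)) ∂μ)) := by
    refine lintegral_tendsto_of_tendsto_of_monotone
      (fun n => ((hf n).neg.ereal_toENNReal).aemeasurable)
      (ae_of_all _ fun x i j hij =>
        EReal.toENNReal_le_toENNReal (EReal.neg_le_neg_iff.2 (hanti hij x)))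
      (ae_of_all _ fun x => (EReal.continuous_toENNReal.tendsto _).comp ?_)
    exact (continuous_neg.tendsto _).comp (hlim x)
  have hfin : (∫⁻ x, epos (g x) ∂μ) ≠ ⊤ := by
    have : (∫⁻ x, epos (g x) ∂μ) ≤ ∫⁻ _, ENNReal.ofReal C ∂μ := lintegral_mono fun x => by
      simpa using! EReal.toENNReal_le_toENNReal
        (le_of_tendsto (hlim x) (Eventually.of_forall fun n => hle n x))
    exact ne_top_of_le_ne_top (by simp) this
  have hadd := (EReal.continuousAt_add (p := (((∫⁻ x, epos (g x) ∂μ : ℝ≥0∞) : EReal),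
    -((∫⁻ x, epos (-(g x)) ∂μ : ℝ≥0∞) : EReal))) (Or.inl (by simpa using hfin))
    (Or.inl (by simp)))
  exact hadd.tendsto.comp
    (((continuous_coe_ennreal_ereal.tendsto _).comp hpos).prodMk_nhds
      ((continuous_neg.tendsto _).comp ((continuous_coe_ennreal_ereal.tendsto _).comp hneg)))

end ExtendedIntegral

section Semicontinuity

/-- On a compact space, suprema of an antitone sequence of upper semicontinuous functions converge
to the supremum of the limit. -/
lemma iSup_iInf_eq_of_antitone_usc {K β : Type*} [TopologicalSpace K] [CompactSpace K]
    [CompleteLinearOrder β] {Φ : ℕ → K → β} (husc : ∀ n, UpperSemicontinuous (Φ n))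
    (hanti : Antitone Φ) : ⨆ k, ⨅ n, Φ n k = ⨅ n, ⨆ k, Φ n k := by
  refine le_antisymm (iSup_iInf_le_iInf_iSup _) ?_
  set d := ⨅ n, ⨆ k, Φ n k
  have hle : ∀ n, d ≤ ⨆ k, Φ n k := fun n => iInf_le _ n
  rcases isEmpty_or_nonempty K with hK | hK
  · exact (hle 0).trans (by simp)
  obtain ⟨k, hk⟩ := IsCompact.nonempty_iInter_of_sequence_nonempty_isCompact_isClosed
    (fun n => Φ n ⁻¹' Ici d) (fun n k hk => le_trans hk (hanti n.le_succ k))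
    (fun n => by
      obtain ⟨k, -, hk⟩ := ((husc n).upperSemicontinuousOn univ).exists_isMaxOn univ_nonempty
        isCompact_univ
      exact ⟨k, (hle n).trans (iSup_le fun k' => hk (mem_univ k'))⟩)
    (upperSemicontinuous_iff_isClosed_preimage.1 (husc 0) d).isCompact
    (fun n => upperSemicontinuous_iff_isClosed_preimage.1 (husc n) d)
  exact le_iSup_of_le k (le_iInf fun n => mem_iInter.1 hk n)

/-- The partial supremum of an upper semicontinuous function over a compact space is upper
semicontinuous. -/
lemma UpperSemicontinuous.iSup_of_compactSpace {Z K : Type*} [TopologicalSpace Z]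
    [TopologicalSpace K] [CompactSpace K] {Ψ : Z → K → EReal}
    (h : UpperSemicontinuous fun p : Z × K => Ψ p.1 p.2) :
    UpperSemicontinuous fun z => ⨆ k, Ψ z k := by
  intro z c hc
  obtain ⟨d, hd, hdc⟩ := exists_between hc
  have : ∀ᶠ z' in 𝓝 z, ∀ k ∈ (univ : Set K), Ψ z' k < d :=
    isCompact_univ.eventually_forall_of_forall_eventually fun k _ =>
      h (z, k) d ((le_iSup (Ψ z) k).trans_lt hd)
  filter_upwards [this] with z' hz'
  exact (iSup_le fun k => (hz' k (mem_univ k)).le).trans_lt hdc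

/-- An upper semicontinuous function bounded above on a metric space is the limit of a
decreasing sequence of continuous functions. -/
lemma UpperSemicontinuous.exists_antitone_continuous_tendsto {Y : Type*} [PseudoMetricSpace Y]
    {g : Y → EReal} (hg : UpperSemicontinuous g) {M : ℝ} (hM : ∀ y, g y ≤ M) :
    ∃ h : ℕ → C(Y, ℝ), Antitone h ∧
      ∀ y, Tendsto (fun n => (h n y : EReal)) atTop (𝓝 (g y)) := by
  set r : ℕ → Y → ℝ := fun n z => (max (g z) ((-n : ℝ) : EReal)).toReal
  have hcoe : ∀ n z, (r n z : EReal) = max (g z) ((-n : ℝ) : EReal) := fun n z => by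
    refine EReal.coe_toReal (ne_of_lt ?_) (ne_of_gt ?_)
    · exact max_lt ((hM z).trans_lt (EReal.coe_lt_top _)) (EReal.coe_lt_top _)
    · exact lt_max_of_lt_right (EReal.bot_lt_coe _)
  have hrM : ∀ n z, r n z ≤ max M 0 := fun n z => by
    rw [← EReal.coe_le_coe_iff, hcoe]
    refine max_le ((hM z).trans ?_) ?_ <;> rw [EReal.coe_le_coe_iff]
    · exact le_max_left _ _
    · exact le_max_of_le_right (by simp)
  have hranti : ∀ {m n} z, m ≤ n → r n z ≤ r m z := fun {m n} z hmn => by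
    rw [← EReal.coe_le_coe_iff, hcoe, hcoe]
    refine max_le_max le_rfl (EReal.coe_le_coe_iff.2 ?_)
    simpa using hmn
  have hbdd : ∀ n y, BddAbove (range fun z => r n z - n * dist z y) := fun n y => by
    refine ⟨max M 0, ?_⟩
    rintro _ ⟨z, rfl⟩
    have : 0 ≤ (n : ℝ) * dist z y := by positivity
    linarith [hrM n z]
  set s : ℕ → Y → ℝ := fun n y => ⨆ z, (r n z - n * dist z y) with hs
  have hlip : ∀ n : ℕ, LipschitzWith n (s n) := fun n => by
    refine LipschitzWith.of_le_add_mul _ fun x y => ?_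
    have : Nonempty Y := ⟨x⟩
    refine ciSup_le fun z => ?_
    have h1 := le_ciSup (hbdd n y) z
    have h2 : (n : ℝ) * dist z y ≤ n * (dist z x + dist x y) := by
      gcongr; exact dist_triangle _ _ _
    simp only [NNReal.coe_natCast, hs] at h1 ⊢
    linarith
  refine ⟨fun n => ⟨s n, (hlip n).continuous⟩, fun m n hmn y => ?_, fun y => ?_⟩
  · have : Nonempty Y := ⟨y⟩
    refine ciSup_mono (hbdd m y) fun z => ?_
    have : (m : ℝ) * dist z y ≤ n * dist z y := by gcongr
    linarith [hranti z hmn]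
  · have : Nonempty Y := ⟨y⟩
    have hge : ∀ n, g y ≤ (s n y : EReal) := fun n => by
      have h1 := le_ciSup (hbdd n y) y
      simp only [dist_self, mul_zero, sub_zero] at h1
      calc g y ≤ r n y := by rw [hcoe]; exact le_max_left _ _
        _ ≤ s n y := EReal.coe_le_coe_iff.2 h1
    refine tendsto_order.2 ⟨fun a ha => Eventually.of_forall fun n => ha.trans_le (hge n),
      fun a ha => ?_⟩
    obtain ⟨c, hgc, hca⟩ := EReal.lt_iff_exists_real_btwn.1 ha
    obtain ⟨δ, hδ, hball⟩ := Metric.eventually_nhds_iff.1 (hg y c hgc)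
    obtain ⟨N₁, hN₁⟩ := exists_nat_ge (-c)
    obtain ⟨N₂, hN₂⟩ := exists_nat_ge ((max M 0 - c) / δ)
    filter_upwards [eventually_ge_atTop N₁, eventually_ge_atTop N₂] with n hn₁ hn₂
    refine lt_of_le_of_lt (EReal.coe_le_coe_iff.2 (ciSup_le fun z => ?_)) hca
    have hn₁' : (N₁ : ℝ) ≤ n := by exact_mod_cast hn₁
    have hn₂' : (N₂ : ℝ) ≤ n := by exact_mod_cast hn₂
    by_cases hz : dist z y < δ
    · have h1 : r n z ≤ c := by
        rw [← EReal.coe_le_coe_iff, hcoe]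
        exact max_le (hball hz).le (EReal.coe_le_coe_iff.2 (by linarith))
      have : 0 ≤ (n : ℝ) * dist z y := by positivity
      linarith
    · have h1 : max M 0 - c ≤ n * δ := (div_le_iff₀ hδ).1 (hN₂.trans hn₂')
      have h2 : (n : ℝ) * δ ≤ n * dist z y := by gcongr; exact not_lt.1 hz
      linarith [hrM n z]

end Semicontinuity

section FenchelMoreau

variable {Y : Type*} [TopologicalSpace Y] [CompactSpace Y] [MeasurableSpace Y] [BorelSpace Y]

lemma ContinuousMap.integrable_of_compactSpace (g : C(Y, ℝ)) (σ : Measure Y) [IsFiniteMeasure σ] :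
    Integrable g σ :=
  (BoundedContinuousFunction.mkOfCompact g).integrable σ

lemma continuous_integral_continuousMap (g : C(Y, ℝ)) :
    Continuous fun σ : ProbabilityMeasure Y => ∫ y, g y ∂(σ : Measure Y) :=
  ProbabilityMeasure.continuous_integral_boundedContinuousFunction
    (BoundedContinuousFunction.mkOfCompact g)

/-- A probability measure as a linear functional on continuous functions, the space of all such
functionals carrying the topology of pointwise convergence. -/
def integralFunctional (σ : ProbabilityMeasure Y) :
    WeakBilin (LinearMap.id : (C(Y, ℝ) →ₗ[ℝ] ℝ) →ₗ[ℝ] C(Y, ℝ) →ₗ[ℝ] ℝ) :=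
  ({ toFun := fun g => ∫ y, g y ∂(σ : Measure Y)
     map_add' := fun f g => integral_add (f.integrable_of_compactSpace _)
      (g.integrable_of_compactSpace _)
     map_smul' := fun c g => integral_const_mul c g } : C(Y, ℝ) →ₗ[ℝ] ℝ)

lemma continuous_integralFunctional :
    Continuous (integralFunctional : ProbabilityMeasure Y → _) :=
  WeakBilin.continuous_of_continuous_eval _ continuous_integral_continuousMap

lemma integralFunctional_injective [HasOuterApproxClosed Y] :
    Function.Injective (integralFunctional : ProbabilityMeasure Y → _) := fun σ τ h =>
  Subtype.ext <| ext_of_forall_integral_eq_of_IsFiniteMeasure (μ := (σ : Measure Y))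
    (ν := (τ : Measure Y)) fun f =>
    DFunLike.congr_fun (F := C(Y, ℝ) →ₗ[ℝ] ℝ) h f.toContinuousMap

lemma integralFunctional_combo {σ₁ σ₂ σ : ProbabilityMeasure Y} {a b : ℝ≥0}
    (h : (σ : Measure Y) = a • (σ₁ : Measure Y) + b • (σ₂ : Measure Y)) :
    integralFunctional σ =
      (a : ℝ) • integralFunctional σ₁ + (b : ℝ) • integralFunctional σ₂ := by
  refine LinearMap.ext (f := (integralFunctional σ : C(Y, ℝ) →ₗ[ℝ] ℝ)) fun g => ?_
  change ∫ y, g y ∂(σ : Measure Y) =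
    (a : ℝ) * ∫ y, g y ∂(σ₁ : Measure Y) + (b : ℝ) * ∫ y, g y ∂(σ₂ : Measure Y)
  rw [h, integral_add_measure (g.integrable_of_compactSpace _) (g.integrable_of_compactSpace _),
    integral_smul_nnreal_measure, integral_smul_nnreal_measure]
  rfl

/-- Fenchel–Moreau: a convex weak*-lower semicontinuous functional on probability measures is the
supremum of its continuous affine minorants. -/
lemma exists_continuousMap_affine_minorant [T2Space Y] [HasOuterApproxClosed Y]
    {F : ProbabilityMeasure Y → EReal} (hF : LowerSemicontinuous F) {m : ℝ}
    (hm : ∀ σ, (m : EReal) ≤ F σ)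
    (hconv : ∀ (σ₁ σ₂ σ : ProbabilityMeasure Y) (a b : ℝ≥0), a + b = 1 →
      (σ : Measure Y) = a • (σ₁ : Measure Y) + b • (σ₂ : Measure Y) →
      F σ ≤ ((a : ℝ) : EReal) * F σ₁ + ((b : ℝ) : EReal) * F σ₂)
    {ν : ProbabilityMeasure Y} {c : ℝ} (hc : (c : EReal) < F ν) :
    ∃ g : C(Y, ℝ), ∀ σ : ProbabilityMeasure Y,
      ((∫ y, g y ∂(σ : Measure Y) : ℝ) : EReal) - F σ ≤
        ((∫ y, g y ∂(ν : Measure Y) - c : ℝ) : EReal) := by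
  suffices H : ∃ g : C(Y, ℝ), ∀ (σ : ProbabilityMeasure Y) (t : ℝ), F σ ≤ t →
      ∫ y, g y ∂(σ : Measure Y) - t ≤ ∫ y, g y ∂(ν : Measure Y) - c by
    obtain ⟨g, hg⟩ := H
    refine ⟨g, fun σ => ?_⟩
    have h1 := hg σ
    have h2 := hm σ
    induction hσ : F σ with
    | bot => simp [hσ] at h2
    | top => simp
    | coe t => exact_mod_cast h1 t hσ.le
  let P : Set (ProbabilityMeasure Y × ℝ) := {p | F p.1 ≤ p.2}
  have hP : IsClosed P := by
    have : IsClosed {p : ProbabilityMeasure Y × EReal | F p.1 ≤ p.2} :=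
      hF.isClosed_epigraph
    exact this.preimage
      (continuous_fst.prodMk (continuous_coe_real_ereal.comp continuous_snd))
  rcases P.eq_empty_or_nonempty with hemp | ⟨⟨σ₀, t₀⟩, h₀⟩
  · exact ⟨0, fun σ t ht => absurd (show (σ, t) ∈ P from ht) (by simp [hemp])⟩
  let B : (C(Y, ℝ) →ₗ[ℝ] ℝ) →ₗ[ℝ] C(Y, ℝ) →ₗ[ℝ] ℝ := LinearMap.id
  have : T2Space (WeakBilin B) := (WeakBilin.isEmbedding (B := B) Function.injective_id).t2Space
  let E : Set (WeakBilin B × ℝ) := Prod.map integralFunctional id '' P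
  have hE : IsClosed E :=
    ((continuous_integralFunctional.isProperMap).prodMap isProperMap_id).isClosedMap _ hP
  have hEconv : Convex ℝ E := by
    rintro _ ⟨⟨σ₁, t₁⟩, h₁, rfl⟩ _ ⟨⟨σ₂, t₂⟩, h₂, rfl⟩ a b ha hb hab
    lift a to ℝ≥0 using ha
    lift b to ℝ≥0 using hb
    have hab' : a + b = 1 := by exact_mod_cast hab
    let σ : ProbabilityMeasure Y := ⟨a • (σ₁ : Measure Y) + b • (σ₂ : Measure Y), ⟨by
      simp only [Measure.add_apply, Measure.smul_apply, measure_univ, ENNReal.smul_def,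
        smul_eq_mul, mul_one]
      exact_mod_cast hab'⟩⟩
    refine ⟨(σ, a * t₁ + b * t₂), ?_, Prod.ext (integralFunctional_combo rfl) rfl⟩
    change F σ ≤ ((a * t₁ + b * t₂ : ℝ) : EReal)
    refine (hconv σ₁ σ₂ σ a b hab' rfl).trans ?_
    rw [EReal.coe_add, EReal.coe_mul, EReal.coe_mul]
    exact add_le_add (mul_le_mul_of_nonneg_left h₁ (by simp))
      (mul_le_mul_of_nonneg_left h₂ (by simp))
  have hν : (integralFunctional ν, c) ∉ E := by
    rintro ⟨⟨σ, t⟩, hσ, h⟩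
    obtain rfl : σ = ν := integralFunctional_injective (congrArg Prod.fst h)
    obtain rfl : t = c := congrArg Prod.snd h
    exact hc.not_ge hσ
  obtain ⟨f, u, hfν, hfE⟩ := geometric_hahn_banach_point_closed hEconv hE hν
  obtain ⟨g₀, hg₀⟩ := LinearMap.dualEmbedding_surjective B
    (f.comp (ContinuousLinearMap.inl ℝ (WeakBilin B) ℝ))
  set s : ℝ := f (0, 1)
  have hf : ∀ (σ : ProbabilityMeasure Y) (t : ℝ),
      f (integralFunctional σ, t) = ∫ y, g₀ y ∂(σ : Measure Y) + s * t := fun σ t => by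
    have h1 : ∫ y, g₀ y ∂(σ : Measure Y) = f (integralFunctional σ, 0) :=
      DFunLike.congr_fun hg₀ (integralFunctional σ)
    have h2 : ((integralFunctional σ, t) : WeakBilin B × ℝ) =
        (integralFunctional σ, 0) + t • (0, 1) := by simp
    rw [h1, h2, map_add, map_smul, smul_eq_mul, mul_comm t]
  rw [hf] at hfν
  have hfE' : ∀ (σ : ProbabilityMeasure Y) (t : ℝ), F σ ≤ t →
      u < ∫ y, g₀ y ∂(σ : Measure Y) + s * t := fun σ t ht => by
    rw [← hf]; exact hfE _ ⟨(σ, t), ht, rfl⟩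
  have hs0 : 0 ≤ s := by
    by_contra! hneg
    set A := ∫ y, g₀ y ∂(σ₀ : Measure Y)
    have h1 := hfE' σ₀ (max t₀ ((u - A) / s)) (h₀.trans (EReal.coe_le_coe_iff.2 (le_max_left _ _)))
    have h2 : s * max t₀ ((u - A) / s) ≤ s * ((u - A) / s) :=
      mul_le_mul_of_nonpos_left (le_max_right _ _) hneg.le
    rw [mul_div_cancel₀ _ hneg.ne] at h2
    linarith
  have hint : ∀ (k : ℝ) (σ : ProbabilityMeasure Y),
      ∫ y, (k • g₀) y ∂(σ : Measure Y) = k * ∫ y, g₀ y ∂(σ : Measure Y) := fun k σ =>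
    integral_const_mul k g₀
  rcases hs0.eq_or_lt with hs0 | hs0
  · set A := ∫ y, g₀ y ∂(ν : Measure Y) with hA
    simp only [← hs0, zero_mul, add_zero] at hfν hfE'
    have hd : 0 < u - A := by linarith
    refine ⟨(-(|c - m| / (u - A))) • g₀, fun σ t ht => ?_⟩
    rw [hint, hint, ← hA]
    have h1 : |c - m| / (u - A) * (u - A) = |c - m| := div_mul_cancel₀ _ hd.ne'
    have h2 : |c - m| / (u - A) * u ≤ |c - m| / (u - A) * ∫ y, g₀ y ∂(σ : Measure Y) :=
      mul_le_mul_of_nonneg_left (hfE' σ t ht).le (by positivity)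
    have h3 : m ≤ t := EReal.coe_le_coe_iff.1 ((hm σ).trans ht)
    linarith [le_abs_self (c - m)]
  · refine ⟨(-s⁻¹) • g₀, fun σ t ht => ?_⟩
    rw [hint, hint]
    have h1 := mul_lt_mul_of_pos_left (hfν.trans (hfE' σ t ht)) (inv_pos.2 hs0)
    rw [mul_add, mul_add, inv_mul_cancel_left₀ hs0.ne', inv_mul_cancel_left₀ hs0.ne'] at h1
    linarith

end FenchelMoreau

lemma EReal.sub_le_of_sub_le {a b c : EReal} (hb : b ≠ ⊥) (h : a - b ≤ c) : a - c ≤ b := by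
  induction b with
  | bot => exact absurd rfl hb
  | top => exact le_top
  | coe b =>
    induction c with
    | bot =>
      obtain rfl : a = ⊥ := by
        induction a with
        | bot => rfl
        | top => simp at h
        | coe a => exact absurd (le_bot_iff.1 h) (by rw [← EReal.coe_sub]; exact EReal.coe_ne_bot _)
      simp
    | top => simp
    | coe c =>
      rw [EReal.sub_le_iff_le_add (by simp) (by simp)] at h ⊢
      rwa [add_comm]

section Transfer

variable {X Y : Type*} [MeasurableSpace X]
  [MetricSpace Y] [CompactSpace Y] [MeasurableSpace Y] [BorelSpace Y]
  {𝒯 : ProbabilityMeasure X → ProbabilityMeasure Y → EReal}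

lemma eint_continuousMap (g : C(Y, ℝ)) (σ : ProbabilityMeasure Y) :
    eint (σ : Measure Y) (fun y => (g y : EReal)) = ((∫ y, g y ∂(σ : Measure Y) : ℝ) : EReal) :=
  eint_coe _ (g.integrable_of_compactSpace _)

lemma TopC_eq_TopU (g : C(Y, ℝ)) : TopC 𝒯 g = TopU 𝒯 fun y => (g y : EReal) := by
  funext x
  simp only [TopC, TopU, eint_continuousMap]

variable [MetricSpace X] [BorelSpace X]

lemma IsBLT.upperSemicontinuous_integral_sub (h : IsBLT 𝒯) (g : C(Y, ℝ)) :
    UpperSemicontinuous fun p : ProbabilityMeasure X × ProbabilityMeasure Y =>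
      ((∫ y, g y ∂(p.2 : Measure Y) : ℝ) : EReal) - 𝒯 p.1 p.2 := by
  obtain ⟨-, -, -, -, hlsc, -⟩ := h
  have hneg : UpperSemicontinuous fun p : ProbabilityMeasure X × ProbabilityMeasure Y =>
      -𝒯 p.1 p.2 :=
    continuous_neg.comp_lowerSemicontinuous_antitone hlsc fun a b hab =>
      EReal.neg_le_neg_iff.2 hab
  have hint : Continuous fun p : ProbabilityMeasure X × ProbabilityMeasure Y =>
      ((∫ y, g y ∂(p.2 : Measure Y) : ℝ) : EReal) :=
    continuous_coe_real_ereal.comp ((continuous_integral_continuousMap g).comp continuous_snd)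
  exact hint.upperSemicontinuous.add' hneg fun p =>
    EReal.continuousAt_add (Or.inl (EReal.coe_ne_top _)) (Or.inl (EReal.coe_ne_bot _))

lemma IsBLT.upperSemicontinuous_TopC (h : IsBLT 𝒯) (g : C(Y, ℝ)) :
    UpperSemicontinuous (TopC 𝒯 g) :=
  UpperSemicontinuous.iSup_of_compactSpace
    (Ψ := fun x (σ : ProbabilityMeasure Y) =>
      ((∫ y, g y ∂(σ : Measure Y) : ℝ) : EReal) - 𝒯 (diracP x) σ)
    ((h.upperSemicontinuous_integral_sub g).comp (g := fun p : X × ProbabilityMeasure Y =>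
      ((diracP p.1, p.2) : ProbabilityMeasure X × ProbabilityMeasure Y))
      (continuous_diracProba.prodMap continuous_id))

lemma IsBLT.iSup_eint_sub_eq_iInf (h : IsBLT 𝒯) {g : Y → EReal} {f : ℕ → C(Y, ℝ)}
    (hanti : Antitone f) (hlim : ∀ y, Tendsto (fun n => (f n y : EReal)) atTop (𝓝 (g y)))
    (μ : ProbabilityMeasure X) :
    ⨆ σ : ProbabilityMeasure Y, eint (σ : Measure Y) g - 𝒯 μ σ =
      ⨅ n, ⨆ σ : ProbabilityMeasure Y,
        ((∫ y, f n y ∂(σ : Measure Y) : ℝ) : EReal) - 𝒯 μ σ := by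
  have hΦ : Antitone fun n (σ : ProbabilityMeasure Y) =>
      ((∫ y, f n y ∂(σ : Measure Y) : ℝ) : EReal) - 𝒯 μ σ := fun m n hmn σ =>
    EReal.sub_le_sub (EReal.coe_le_coe_iff.2 (integral_mono ((f n).integrable_of_compactSpace _)
      ((f m).integrable_of_compactSpace _) (hanti hmn))) le_rfl
  have hΦusc : ∀ n, UpperSemicontinuous fun σ : ProbabilityMeasure Y =>
      ((∫ y, f n y ∂(σ : Measure Y) : ℝ) : EReal) - 𝒯 μ σ := fun n =>
    (h.upperSemicontinuous_integral_sub (f n)).comp (g := fun σ => (μ, σ))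
      (continuous_const.prodMk continuous_id)
  rw [← iSup_iInf_eq_of_antitone_usc hΦusc hΦ]
  refine iSup_congr fun σ => ?_
  obtain ⟨C, hC⟩ := (isCompact_range (f 0).continuous).bddAbove
  have hf0 : ∀ y, (f 0 y : EReal) ≤ C := fun y => EReal.coe_le_coe_iff.2 (hC ⟨y, rfl⟩)
  have hg : ∀ y, g y ≤ C := fun y => le_of_tendsto (hlim y)
    (Eventually.of_forall fun n => (EReal.coe_le_coe_iff.2 (hanti n.zero_le y)).trans (hf0 y))
  have ht : Tendsto (fun n => ((∫ y, f n y ∂(σ : Measure Y) : ℝ) : EReal)) atTop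
      (𝓝 (eint (σ : Measure Y) g)) := by
    simpa only [eint_continuousMap] using tendsto_eint_of_antitone (σ : Measure Y)
      (f := fun n y => (f n y : EReal))
      (fun n => ((f n).continuous.measurable).coe_real_ereal)
      (fun m n hmn y => EReal.coe_le_coe_iff.2 (hanti hmn y)) hf0 hlim
  have hadd := EReal.continuousAt_add (p := (eint (σ : Measure Y) g, -𝒯 μ σ))
    (Or.inl ((eint_le_of_le (σ : Measure Y) hg).trans_lt (EReal.coe_lt_top _)).ne)
    (Or.inr (by simpa using h.1 μ σ))
  exact tendsto_nhds_unique (hadd.tendsto.comp (ht.prodMk_nhds tendsto_const_nhds))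
    (tendsto_atTop_iInf fun m n hmn => hΦ hmn σ)

lemma IsBLT.iSup_eint_sub_eq (h : IsBLT 𝒯) (μ : ProbabilityMeasure X) {g : Y → EReal}
    (hg : UpperSemicontinuous g) {M : ℝ} (hM : ∀ y, g y ≤ M) :
    ⨆ σ : ProbabilityMeasure Y, eint (σ : Measure Y) g - 𝒯 μ σ =
      eint (μ : Measure X) (TopU 𝒯 g) := by
  obtain ⟨f, hanti, hlim⟩ := hg.exists_antitone_continuous_tendsto hM
  have hTanti : Antitone fun n => TopC 𝒯 (f n) := fun m n hmn x => iSup_mono fun σ =>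
    EReal.sub_le_sub (EReal.coe_le_coe_iff.2 (integral_mono ((f n).integrable_of_compactSpace _)
      ((f m).integrable_of_compactSpace _) (hanti hmn))) le_rfl
  have hTlim : ∀ x, Tendsto (fun n => TopC 𝒯 (f n) x) atTop (𝓝 (TopU 𝒯 g x)) := fun x => by
    rw [TopU, h.iSup_eint_sub_eq_iInf hanti hlim (diracP x)]
    exact tendsto_atTop_iInf fun m n hmn => hTanti hmn x
  obtain ⟨C, hC⟩ := (isCompact_range (f 0).continuous).bddAbove
  obtain ⟨m, hm⟩ := h.2.2.1
  have hbound : ∀ x, TopC 𝒯 (f 0) x ≤ ((C - m : ℝ) : EReal) := fun x => iSup_le fun σ => by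
    rw [EReal.coe_sub, ← eint_continuousMap]
    exact EReal.sub_le_sub
      (eint_le_of_le _ fun y => EReal.coe_le_coe_iff.2 (hC ⟨y, rfl⟩)) (hm _ _)
  have ht := tendsto_eint_of_antitone (μ : Measure X)
    (fun n => (h.upperSemicontinuous_TopC (f n)).measurable) hTanti hbound hTlim
  rw [h.iSup_eint_sub_eq_iInf hanti hlim μ]
  simp only [h.2.2.2.2.2 μ]
  exact tendsto_nhds_unique
    (tendsto_atTop_iInf fun m n hmn => eint_mono _ (hTanti hmn)) ht

end Transfer

/-- The duality formulas of a backward linear transfer extend from continuous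
functions to upper semicontinuous bounded-above functions. -/
theorem blt_duality_usc_extension
    {X Y : Type*} [MetricSpace X] [CompactSpace X] [MeasurableSpace X] [BorelSpace X]
    [MetricSpace Y] [CompactSpace Y] [MeasurableSpace Y] [BorelSpace Y]
    (𝒯 : ProbabilityMeasure X → ProbabilityMeasure Y → EReal) (h𝒯 : IsBLT 𝒯) :
    (∀ (μ : ProbabilityMeasure X) (ν : ProbabilityMeasure Y),
      𝒯 μ ν = ⨆ g ∈ {g : Y → EReal | UpperSemicontinuous g ∧
            (∃ M : ℝ, ∀ y, g y ≤ (M : EReal)) ∧ (∃ m : ℝ, ∀ y, (m : EReal) ≤ g y)},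
          (eint (ν : Measure Y) g - eint (μ : Measure X) (TopU 𝒯 g))) ∧
    (∀ (μ : ProbabilityMeasure X) (g : Y → EReal), UpperSemicontinuous g →
        (∃ M : ℝ, ∀ y, g y ≤ (M : EReal)) →
        (⨆ σ : ProbabilityMeasure Y, eint (σ : Measure Y) g - 𝒯 μ σ)
          = eint (μ : Measure X) (TopU 𝒯 g)) := by
  refine ⟨fun μ ν => le_antisymm (le_of_forall_lt fun d hd => ?_) (iSup₂_le fun g hg => ?_),
    fun μ g hg ⟨M, hM⟩ => h𝒯.iSup_eint_sub_eq μ hg hM⟩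
  · obtain ⟨c, hdc, hc⟩ := EReal.lt_iff_exists_real_btwn.1 hd
    have hduality := h𝒯.2.2.2.2.2 μ
    obtain ⟨-, -, ⟨m, hm⟩, hconv, hlsc, -⟩ := h𝒯
    obtain ⟨g, hg⟩ := exists_continuousMap_affine_minorant
      (F := 𝒯 μ) (hlsc.comp (continuous_const.prodMk continuous_id)) (hm μ)
      (fun σ₁ σ₂ σ a b hab hσ => hconv μ μ σ₁ σ₂ μ σ a b hab
        (by rw [← add_smul, hab, one_smul]) hσ) hc
    obtain ⟨C, hC⟩ := (isCompact_range g.continuous).bddAbove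
    obtain ⟨D, hD⟩ := (isCompact_range g.continuous).bddBelow
    refine hdc.trans_le (le_iSup₂_of_le (fun y => (g y : EReal))
      ⟨(continuous_coe_real_ereal.comp g.continuous).upperSemicontinuous,
        ⟨C, fun y => EReal.coe_le_coe_iff.2 (hC ⟨y, rfl⟩)⟩,
        ⟨D, fun y => EReal.coe_le_coe_iff.2 (hD ⟨y, rfl⟩)⟩⟩ ?_)
    rw [← TopC_eq_TopU, ← hduality, eint_continuousMap]
    calc (c : EReal) = ((∫ y, g y ∂(ν : Measure Y) : ℝ) : EReal) -
          ((∫ y, g y ∂(ν : Measure Y) - c : ℝ) : EReal) := by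
          rw [← EReal.coe_sub, sub_sub_cancel]
      _ ≤ _ := EReal.sub_le_sub le_rfl (iSup_le hg)
  · obtain ⟨husc, ⟨M, hM⟩, -⟩ := hg
    refine EReal.sub_le_of_sub_le (h𝒯.1 μ ν) ?_
    rw [← h𝒯.iSup_eint_sub_eq μ husc hM]
    exact le_iSup (fun σ : ProbabilityMeasure Y => eint (σ : Measure Y) g - 𝒯 μ σ) ν
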